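/- For any ring R and R-module M with n ≥ 1, fd_R(M) ≤ n if and only if Ext^n_R(M,W)=0 for every weak-injective (L_1-injective) R-module W. -/

import Mathlib

open CategoryTheory

/-- Flatness of a module over an arbitrary (possibly noncommutative) ring,
via the equational criterion: every relation is a consequence of trivial relations. -/
def IsFlatMod (R : Type) [Ring R] (M : Type) [AddCommGroup M] [Module R M] : Prop :=
  ∀ (ι : Type) (_ : Fintype ι) (r : ι → R) (x : ι → M),
    (∑ i, r i • x i = 0) →
      ∃ (κ : Type) (_ : Fintype κ) (a : ι → κ → R) (y : κ → M),
        (∀ i, x i = ∑ j, a i j • y j) ∧ ∀ j, (∑ i, r i * a i j) = 0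

variable (R : Type) [Ring R]

/-- `Ext^n_R(M, N) = 0`. -/
def extVanish (n : ℕ) (M N : ModuleCat.{0} R) : Prop :=
  Subsingleton (((Ext ℤ (ModuleCat.{0} R) n).obj (Opposite.op M)).obj N)

/-- `M` has flat dimension at most `n`. -/
def fdLE : ℕ → ModuleCat.{0} R → Prop
  | 0, M => IsFlatMod R M
  | n+1, M => ∃ (K F : ModuleCat.{0} R) (f : K ⟶ F) (g : F ⟶ M),
      IsFlatMod R F ∧ Function.Injective f ∧ Function.Surjective g ∧
        Function.Exact f g ∧ fdLE n K

/-- `W` is `L_n`-injective: `Ext^1_R(M, W) = 0` for every `M` of flat dimension at most `n`. -/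
def LnInj (n : ℕ) (W : ModuleCat.{0} R) : Prop :=
  ∀ M : ModuleCat.{0} R, fdLE R n M → extVanish R 1 M W

section Ext

theorem extVanish_succ_iff (n : ℕ) (M N : ModuleCat.{0} R) :
    extVanish R (n + 1) M N ↔ Subsingleton (Abelian.Ext M N (n + 1)) := by
  let P := ProjectiveResolution.of M
  have h_exact : extVanish R (n + 1) M N ↔
      (P.complex.linearYonedaObj ℤ N).ExactAt (n + 1) := by
    rw [extVanish, ← ModuleCat.isZero_iff_subsingleton,
      HomologicalComplex.exactAt_iff_isZero_homology]
    exact (P.isoExt (R := ℤ) (n + 1) N).isZero_iff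
  rw [h_exact, HomologicalComplex.exactAt_iff' _ n (n + 1) (n + 2) (by simp) (by simp),
    ShortComplex.moduleCat_exact_iff]
  constructor
  · intro h
    refine subsingleton_of_forall_eq 0 fun x => ?_
    obtain ⟨f, hf, rfl⟩ := P.extMk_surjective x (n + 2) rfl
    exact (P.extMk_eq_zero_iff f (n + 2) rfl hf n rfl).2 (h f hf)
  · intro h f hf
    exact (P.extMk_eq_zero_iff f (n + 2) rfl hf n rfl).1 (Subsingleton.elim _ _)

variable {R} {S : ShortComplex (ModuleCat.{0} R)}

theorem subsingleton_ext_X₃_left (hS : S.ShortExact) (Y : ModuleCat.{0} R) (n : ℕ)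
    [Subsingleton (Abelian.Ext S.X₁ Y n)] [Subsingleton (Abelian.Ext S.X₂ Y (n + 1))] :
    Subsingleton (Abelian.Ext S.X₃ Y (n + 1)) := by
  refine subsingleton_of_forall_eq 0 fun x => ?_
  obtain ⟨y, rfl⟩ := Abelian.Ext.contravariant_sequence_exact₃ hS Y x
    (Subsingleton.elim _ _) (add_comm 1 n)
  rw [Subsingleton.elim y 0, Abelian.Ext.comp_zero]

theorem subsingleton_ext_X₁_left (hS : S.ShortExact) (Y : ModuleCat.{0} R) (n : ℕ)
    [Subsingleton (Abelian.Ext S.X₂ Y n)] [Subsingleton (Abelian.Ext S.X₃ Y (n + 1))] :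
    Subsingleton (Abelian.Ext S.X₁ Y n) := by
  refine subsingleton_of_forall_eq 0 fun x => ?_
  obtain ⟨y, rfl⟩ := Abelian.Ext.contravariant_sequence_exact₁ hS Y x (add_comm 1 n)
    (Subsingleton.elim _ _)
  rw [Subsingleton.elim y 0, Abelian.Ext.comp_zero]

theorem subsingleton_ext_X₃_right (hS : S.ShortExact) (X : ModuleCat.{0} R) (n : ℕ)
    [Subsingleton (Abelian.Ext X S.X₂ n)] [Subsingleton (Abelian.Ext X S.X₁ (n + 1))] :
    Subsingleton (Abelian.Ext X S.X₃ n) := by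
  refine subsingleton_of_forall_eq 0 fun x => ?_
  obtain ⟨y, rfl⟩ := Abelian.Ext.covariant_sequence_exact₃ X hS x rfl (Subsingleton.elim _ _)
  rw [Subsingleton.elim y 0, Abelian.Ext.zero_comp]

theorem subsingleton_ext_X₁_right (hS : S.ShortExact) (X : ModuleCat.{0} R) (n : ℕ)
    [Subsingleton (Abelian.Ext X S.X₃ n)] [Subsingleton (Abelian.Ext X S.X₂ (n + 1))] :
    Subsingleton (Abelian.Ext X S.X₁ (n + 1)) := by
  refine subsingleton_of_forall_eq 0 fun x => ?_
  obtain ⟨y, rfl⟩ := Abelian.Ext.covariant_sequence_exact₁ X hS x (Subsingleton.elim _ _) rfl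
  rw [Subsingleton.elim y 0, Abelian.Ext.zero_comp]

theorem subsingleton_ext_one_iff_lift (hS : S.ShortExact) (X : ModuleCat.{0} R) [Injective S.X₂] :
    Subsingleton (Abelian.Ext X S.X₁ 1) ↔ ∀ h : X ⟶ S.X₃, ∃ l : X ⟶ S.X₂, l ≫ S.g = h := by
  constructor
  · intro _ h
    obtain ⟨y, hy⟩ := Abelian.Ext.covariant_sequence_exact₃ X hS (Abelian.Ext.mk₀ h) rfl
      (Subsingleton.elim _ _)
    obtain ⟨l, rfl⟩ := Abelian.Ext.addEquiv₀.symm.surjective y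
    refine ⟨l, Abelian.Ext.addEquiv₀.symm.injective ?_⟩
    simpa using hy
  · intro h
    refine subsingleton_of_forall_eq 0 fun x => ?_
    obtain ⟨y, rfl⟩ := Abelian.Ext.covariant_sequence_exact₁ X hS x
      (Abelian.Ext.eq_zero_of_injective _) rfl
    obtain ⟨f, rfl⟩ := Abelian.Ext.addEquiv₀.symm.surjective y
    obtain ⟨l, rfl⟩ := h f
    simp [← Abelian.Ext.mk₀_comp_mk₀]

end Ext

section CharDual

/-- The left module of characters `N → ℚ/ℤ` of a right module `N`. -/
def CharDual (N : Type) [AddCommGroup N] : Type := CharacterModule N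

instance (N : Type) [AddCommGroup N] : AddCommGroup (CharDual N) :=
  inferInstanceAs (AddCommGroup (N →+ AddCircle (1 : ℚ)))

instance (N : Type) [AddCommGroup N] : FunLike (CharDual N) N (AddCircle (1 : ℚ)) :=
  inferInstanceAs (FunLike (N →+ AddCircle (1 : ℚ)) _ _)

instance (N : Type) [AddCommGroup N] : AddMonoidHomClass (CharDual N) N (AddCircle (1 : ℚ)) :=
  inferInstanceAs (AddMonoidHomClass (N →+ AddCircle (1 : ℚ)) _ _)

namespace CharDual

variable {N : Type} [AddCommGroup N] [Module Rᵐᵒᵖ N]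

@[ext] theorem ext {N : Type} [AddCommGroup N] {f g : CharDual N} (h : ∀ x, f x = g x) : f = g :=
  DFunLike.ext _ _ h

@[simp] theorem add_apply {N : Type} [AddCommGroup N] (f g : CharDual N) (x : N) :
    (f + g) x = f x + g x := rfl

@[simp] theorem sum_apply {N : Type} [AddCommGroup N] {ι : Type} (s : Finset ι)
    (f : ι → CharDual N) (x : N) : (∑ i ∈ s, f i) x = ∑ i ∈ s, f i x :=
  map_sum (AddMonoidHom.mk' (fun g : CharDual N => g x) fun _ _ => rfl) f s

theorem zsmul_apply {N : Type} [AddCommGroup N] (n : ℤ) (f : CharDual N) (x : N) :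
    (n • f) x = n • f x :=
  map_zsmul (AddMonoidHom.mk' (fun g : CharDual N => g x) fun _ _ => rfl) n f

@[simp] theorem zero_apply {N : Type} [AddCommGroup N] (x : N) :
    (0 : CharDual N) x = 0 := rfl

/-- Constructor for characters. -/
def mk {N : Type} [AddCommGroup N] (f : N → AddCircle (1 : ℚ))
    (hf : ∀ x y, f (x + y) = f x + f y) : CharDual N :=
  AddMonoidHom.mk' f hf

@[simp] theorem mk_apply {N : Type} [AddCommGroup N] (f : N → AddCircle (1 : ℚ))
    (hf : ∀ x y, f (x + y) = f x + f y) (x : N) : mk f hf x = f x := rfl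

instance : SMul R (CharDual N) where
  smul r f := mk (fun x => f (MulOpposite.op r • x)) (by simp)

variable {R} in
@[simp] theorem smul_apply (r : R) (f : CharDual N) (x : N) :
    (r • f) x = f (MulOpposite.op r • x) := rfl

instance : Module R (CharDual N) where
  one_smul f := by ext; simp
  mul_smul r s f := by ext; simp [mul_smul]
  smul_zero r := by ext; simp
  smul_add r f g := by ext; simp
  add_smul r s f := by ext; simp [add_smul]
  zero_smul f := by ext; simp

variable {R}

/-- Every character of a subgroup extends. -/
theorem exists_extension {A B : Type} [AddCommGroup A] [AddCommGroup B] (i : A →+ B)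
    (hi : Function.Injective i) (f : A →+ AddCircle (1 : ℚ)) :
    ∃ g : B →+ AddCircle (1 : ℚ), ∀ x, g (i x) = f x := by
  obtain ⟨g, hg⟩ := CharacterModule.dual_surjective_of_injective i.toIntLinearMap hi f
  exact ⟨g, fun x => DFunLike.congr_fun hg x⟩

/-- A character factors through a homomorphism whose kernel it annihilates. -/
theorem exists_factorization {A B : Type} [AddCommGroup A] [AddCommGroup B] (i : A →+ B)
    (f : A →+ AddCircle (1 : ℚ)) (h : ∀ x, i x = 0 → f x = 0) :
    ∃ g : B →+ AddCircle (1 : ℚ), ∀ x, g (i x) = f x := by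
  obtain ⟨g, hg⟩ := exists_extension (QuotientAddGroup.kerLift i)
    (QuotientAddGroup.kerLift_injective i) (QuotientAddGroup.lift i.ker f h)
  exact ⟨g, fun x => hg x⟩

/-- The linear map to the character module of the ring adjoint to a character. -/
def coext {M : Type} [AddCommGroup M] [Module R M] (g : M →+ AddCircle (1 : ℚ)) :
    M →ₗ[R] CharDual R where
  toFun m := mk (fun r => g (r • m)) (by simp [add_smul])
  map_add' _ _ := by ext; simp
  map_smul' _ _ := by ext; simp [mul_smul]

@[simp] theorem coext_apply {M : Type} [AddCommGroup M] [Module R M]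
    (g : M →+ AddCircle (1 : ℚ)) (m : M) (r : R) : coext g m r = g (r • m) := rfl

instance : Injective (ModuleCat.of R (CharDual R)) where
  factors {X Y} f i _ := by
    obtain ⟨g, hg⟩ := exists_extension i.hom.toAddMonoidHom ((ModuleCat.mono_iff_injective i).1 ‹_›)
      { toFun x := (f x : CharDual R) 1
        map_zero' := by simp
        map_add' := by simp }
    refine ⟨ModuleCat.ofHom (coext g), ?_⟩
    ext x r
    have := hg (r • x)
    simp at this
    simpa using this

/-- Restriction of characters of the ring to a right ideal. -/
def restrict (J : Submodule Rᵐᵒᵖ R) : CharDual R →ₗ[R] CharDual J where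
  toFun f := mk (fun j => f j) (by simp)
  map_add' _ _ := rfl
  map_smul' _ _ := rfl

@[simp] theorem restrict_apply (J : Submodule Rᵐᵒᵖ R) (f : CharDual R) (j : J) :
    restrict J f j = f j := rfl

theorem restrict_surjective (J : Submodule Rᵐᵒᵖ R) : Function.Surjective (restrict J) := by
  intro f
  obtain ⟨g, hg⟩ := exists_extension J.subtype.toAddMonoidHom Subtype.val_injective f
  exact ⟨g, CharDual.ext hg⟩

/-- The characters of the ring annihilating a right ideal. -/
abbrev annihilator (J : Submodule Rᵐᵒᵖ R) : ModuleCat.{0} R :=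
  ModuleCat.of R (LinearMap.ker (restrict J))

theorem subsingleton_ext_one_iff (J : Submodule Rᵐᵒᵖ R) (M : ModuleCat.{0} R) :
    Subsingleton (Abelian.Ext M (annihilator J) 1) ↔
      ∀ h : M →ₗ[R] CharDual J, ∃ l : M →ₗ[R] CharDual R, ∀ m (j : J), l m (j : R) = h m j := by
  have hS := LinearMap.shortExact_shortComplexKer (restrict_surjective J)
  have : Injective (restrict J).shortComplexKer.X₂ :=
    inferInstanceAs (Injective (ModuleCat.of R (CharDual R)))
  refine (subsingleton_ext_one_iff_lift hS M).trans ⟨fun H h => ?_, fun H h => ?_⟩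
  · obtain ⟨l, hl⟩ := H (ModuleCat.ofHom h)
    refine ⟨l.hom, fun m j => ?_⟩
    exact DFunLike.congr_fun (F := CharDual J) (congrArg (fun f => f.hom m) hl) j
  · obtain ⟨l, hl⟩ := H h.hom
    refine ⟨ModuleCat.ofHom l, ?_⟩
    ext m j
    exact hl m j

end CharDual

end CharDual

section Flat

variable {R}

theorem IsFlatMod.subsingleton_ext_one {M : ModuleCat.{0} R} (hM : IsFlatMod R M)
    (J : Submodule Rᵐᵒᵖ R) : Subsingleton (Abelian.Ext M (CharDual.annihilator J) 1) := by
  rw [CharDual.subsingleton_ext_one_iff]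
  intro h
  let α : TensorProduct ℤ J M →+ M := TensorProduct.liftAddHom
    { toFun j := DistribSMul.toAddMonoidHom M (j : R)
      map_zero' := by ext; simp
      map_add' _ _ := by ext; simp [add_smul] } (by intro r j m; simp [mul_smul, smul_comm (j : R) r m, Int.cast_smul_eq_zsmul])
  let β : TensorProduct ℤ J M →+ AddCircle (1 : ℚ) := TensorProduct.liftAddHom
    { toFun j := AddMonoidHom.mk' (fun m => h m j) (by simp)
      map_zero' := by ext; simp
      map_add' _ _ := by ext; simp } (by
      intro r j m
      change h m (r • j) = h (r • m) j
      rw [map_zsmul, map_zsmul h]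
      exact (CharDual.zsmul_apply r (h m) j).symm)
  have hα (j : J) (m : M) : α (j ⊗ₜ[ℤ] m) = (j : R) • m := rfl
  have hβ (j : J) (m : M) : β (j ⊗ₜ[ℤ] m) = h m j := rfl
  obtain ⟨g, hg⟩ := CharDual.exists_factorization α β (fun t ht => by
    obtain ⟨T, rfl⟩ := TensorProduct.exists_finset t
    rw [← Finset.sum_coe_sort] at ht ⊢
    simp only [map_sum, hα, hβ] at ht ⊢
    obtain ⟨κ, _, a, y, hx, ha⟩ := hM _ inferInstance _ _ ht
    have hsum (j : κ) : ∑ i : T, MulOpposite.op (a i j) • i.1.1 = 0 := by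
      ext; simpa using ha j
    simp_rw [hx, map_sum, map_smul, CharDual.sum_apply, CharDual.smul_apply]
    rw [Finset.sum_comm]
    simp_rw [← map_sum, hsum, map_zero, Finset.sum_const_zero])
  exact ⟨CharDual.coext g, fun m j => by simpa [hα, hβ] using hg (j ⊗ₜ[ℤ] m)⟩

theorem isFlatMod_of_subsingleton_ext_one {M : ModuleCat.{0} R}
    (hM : ∀ J : Submodule Rᵐᵒᵖ R, Subsingleton (Abelian.Ext M (CharDual.annihilator J) 1)) :
    IsFlatMod R M := by
  classical
  intro ι _ r x hx
  let π : (ι → R) →ₗ[Rᵐᵒᵖ] R :=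
    { toFun a := ∑ i, r i * a i
      map_add' _ _ := by simp [mul_add, Finset.sum_add_distrib]
      map_smul' _ _ := by simp [Finset.sum_mul, mul_assoc] }
  have hπ (a : ι → R) : π a = ∑ i, r i * a i := rfl
  let G : AddSubgroup (ι → M) :=
    { carrier := {v | ∃ (κ : Type) (_ : Fintype κ) (a : ι → κ → R) (y : κ → M),
        (∀ i, v i = ∑ j, a i j • y j) ∧ ∀ j, (∑ i, r i * a i j) = 0}
      zero_mem' := ⟨Empty, inferInstance, fun _ => Empty.elim, Empty.elim, by simp, by simp⟩
      add_mem' := by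
        rintro v w ⟨κ, _, a, y, hv, ha⟩ ⟨κ', _, a', y', hw, ha'⟩
        exact ⟨κ ⊕ κ', inferInstance, fun i => Sum.elim (a i) (a' i), Sum.elim y y',
          by simp [hv, hw], by simpa using ⟨ha, ha'⟩⟩
      neg_mem' := by
        rintro v ⟨κ, _, a, y, hv, ha⟩
        exact ⟨κ, inferInstance, a, -y, by simp [hv], ha⟩ }
  change x ∈ G
  by_contra hxG
  obtain ⟨c, hc⟩ := CharacterModule.exists_character_apply_ne_zero_of_ne_zero
    (mt (QuotientAddGroup.eq_zero_iff x).1 hxG)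
  let φ : (ι → M) →+ AddCircle (1 : ℚ) := AddMonoidHom.comp c (QuotientAddGroup.mk' G)
  have hφ (a b : ι → R) (m : M) (hab : π a = π b) :
      φ (fun i => a i • m) = φ (fun i => b i • m) := by
    rw [← sub_eq_zero, ← map_sub]
    have hG : ((fun i => a i • m) - fun i => b i • m) ∈ G := by
      refine ⟨Unit, inferInstance, fun i _ => a i - b i, fun _ => m, by simp [sub_smul], fun _ => ?_⟩
      simpa [mul_sub, sub_eq_zero, hπ] using hab
    exact (congrArg c ((QuotientAddGroup.eq_zero_iff _).2 hG)).trans (map_zero c)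
  let s := Function.surjInv π.surjective_rangeRestrict
  have hs (j : LinearMap.range π) : π (s j) = j :=
    congrArg Subtype.val (Function.surjInv_eq π.surjective_rangeRestrict j)
  let h : M →ₗ[R] CharDual (LinearMap.range π) :=
    { toFun m := CharDual.mk (fun j => φ fun i => s j i • m) fun j k => by
        rw [← map_add, hφ (s (j + k)) (s j + s k) m (by simp [hs])]
        congr 1
        ext i
        simp [add_smul]
      map_add' m n := by
        ext j
        simp only [CharDual.mk_apply, CharDual.add_apply, smul_add, ← map_add]
        rfl
      map_smul' a m := by
        ext j
        simp only [CharDual.mk_apply, RingHom.id_apply, CharDual.smul_apply]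
        rw [hφ (s (MulOpposite.op a • j)) (MulOpposite.op a • s j) m (by simp [hs])]
        simp [mul_smul] }
  obtain ⟨l, hl⟩ := (CharDual.subsingleton_ext_one_iff (LinearMap.range π) M).1
    (hM (LinearMap.range π)) h
  have hri (i : ι) : π (Pi.single i 1) = r i := by simp [hπ, Pi.single_apply]
  have key (i : ι) : φ (Pi.single i (x i)) = l (r i • x i) 1 := by
    let j : LinearMap.range π := ⟨r i, Pi.single i 1, hri i⟩
    have hj : h (x i) j = l (x i) (r i) := (hl (x i) j).symm
    rw [map_smul, CharDual.smul_apply, MulOpposite.smul_eq_mul_unop, MulOpposite.unop_op, one_mul,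
      ← hj]
    change _ = φ fun k => s j k • x i
    rw [hφ (s j) (Pi.single i 1) (x i) ((hs j).trans (hri i).symm)]
    congr 1
    ext k
    by_cases hk : k = i
    · subst hk; simp
    · simp [hk]
  apply hc
  change φ x = 0
  rw [← Finset.univ_sum_single x, map_sum]
  simp_rw [key]
  rw [← CharDual.sum_apply, ← map_sum, hx, map_zero, CharDual.zero_apply]

theorem IsFlatMod.finite_relations {M : Type} [AddCommGroup M] [Module R M] (hM : IsFlatMod R M)
    {ν : Type} (s : Finset ν) {ι : Type} [Fintype ι] (r : ν → ι → R) (x : ι → M)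
    (hx : ∀ k ∈ s, ∑ i, r k i • x i = 0) :
    ∃ (κ : Type) (_ : Fintype κ) (a : ι → κ → R) (y : κ → M),
      (∀ i, x i = ∑ j, a i j • y j) ∧ ∀ k ∈ s, ∀ j, (∑ i, r k i * a i j) = 0 := by
  classical
  induction s using Finset.induction_on with
  | empty => exact ⟨ι, inferInstance, fun i j => if i = j then 1 else 0, x, by simp, by simp⟩
  | insert k s _ ih =>
    obtain ⟨κ, _, a, y, hxy, ha⟩ := ih fun k' hk' => hx k' (Finset.mem_insert_of_mem hk')
    obtain ⟨μ, _, b, z, hyz, hb⟩ := hM κ inferInstance (fun j => ∑ i, r k i * a i j) y (by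
      rw [← hx k (Finset.mem_insert_self k s)]
      simp_rw [hxy, Finset.smul_sum, Finset.sum_smul, mul_smul]
      exact Finset.sum_comm)
    refine ⟨μ, inferInstance, fun i l => ∑ j, a i j * b j l, z, fun i => ?_, fun k' hk' l => ?_⟩
    · simp_rw [hxy, hyz, Finset.smul_sum, Finset.sum_smul, mul_smul]
      exact Finset.sum_comm
    · have hsum : ∑ i, r k' i * ∑ j, a i j * b j l = ∑ j, (∑ i, r k' i * a i j) * b j l := by
        simp_rw [Finset.mul_sum, Finset.sum_mul, mul_assoc]
        exact Finset.sum_comm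
      rw [hsum]
      obtain rfl | hk' := Finset.mem_insert.1 hk'
      · exact hb l
      · simp [ha k' hk']

theorem IsFlatMod.X₁ {S : ShortComplex (ModuleCat.{0} R)} (hS : S.ShortExact)
    (h₂ : IsFlatMod R S.X₂) (h₃ : IsFlatMod R S.X₃) : IsFlatMod R S.X₁ := by
  intro ι _ r x hx
  obtain ⟨κ, _, a, y, hxy, ha⟩ := h₂ ι inferInstance r (fun i => S.f (x i)) (by
    simp_rw [← map_smul, ← map_sum, hx, map_zero])
  obtain ⟨μ, _, b, z, hyz, hb⟩ := h₃.finite_relations Finset.univ a (fun j => S.g (y j))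
    fun i _ => by
      simp_rw [← map_smul, ← map_sum, ← hxy]
      exact S.moduleCat_zero_apply _
  choose z' hz' using fun l => hS.moduleCat_surjective_g (z l)
  have hker (j : κ) : S.g (y j - ∑ l, b j l • z' l) = 0 := by
    simp [map_sub, map_sum, hz', hyz]
  choose w hw using fun j => S.moduleCat_exact_iff.1 hS.exact _ (hker j)
  refine ⟨κ, inferInstance, a, w, fun i => hS.moduleCat_injective_f ?_, ha⟩
  simp only [map_sum, map_smul, hw, hxy, smul_sub, Finset.sum_sub_distrib, Finset.smul_sum]
  rw [Finset.sum_comm]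
  simp_rw [← mul_smul, ← Finset.sum_smul, hb i (Finset.mem_univ i)]
  simp

theorem isFlatMod_of_projective (M : ModuleCat.{0} R) [Projective M] : IsFlatMod R M :=
  isFlatMod_of_subsingleton_ext_one fun _ => Abelian.Ext.subsingleton_of_projective _ _ 0

theorem exists_shortExact_projective (M : ModuleCat.{0} R) :
    ∃ (K P : ModuleCat.{0} R) (f : K ⟶ P) (g : P ⟶ M) (w : f ≫ g = 0),
      Projective P ∧ (ShortComplex.mk f g w).ShortExact :=
  ⟨_, _, _, _, _, inferInstance,
    M.shortExact_projectiveShortComplex⟩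

theorem IsFlatMod.subsingleton_ext_succ {M : ModuleCat.{0} R} (hM : IsFlatMod R M)
    (J : Submodule Rᵐᵒᵖ R) (n : ℕ) :
    Subsingleton (Abelian.Ext M (CharDual.annihilator J) (n + 1)) := by
  induction n generalizing M with
  | zero => exact hM.subsingleton_ext_one J
  | succ n ih =>
    obtain ⟨K, P, f, g, w, _, hS⟩ := exists_shortExact_projective M
    have := ih (IsFlatMod.X₁ hS (isFlatMod_of_projective P) hM)
    have := Abelian.Ext.subsingleton_of_projective P (CharDual.annihilator J) (n + 1)
    exact subsingleton_ext_X₃_left hS _ (n + 1)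

theorem fdLE_iff_subsingleton_ext (n : ℕ) (M : ModuleCat.{0} R) :
    fdLE R n M ↔ ∀ J : Submodule Rᵐᵒᵖ R,
      Subsingleton (Abelian.Ext M (CharDual.annihilator J) (n + 1)) := by
  induction n generalizing M with
  | zero => exact ⟨fun h => h.subsingleton_ext_one, isFlatMod_of_subsingleton_ext_one⟩
  | succ n ih =>
    constructor
    · rintro ⟨K, F, f, g, hF, hf, hg, hfg, hK⟩ J
      let S := ShortComplex.mk f g (by ext x; exact hfg.apply_apply_eq_zero x)
      have hS : S.ShortExact := ModuleCat.shortComplex_shortExact S hfg hf hg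
      have : Subsingleton (Abelian.Ext S.X₁ _ _) := (ih K).1 hK J
      have : Subsingleton (Abelian.Ext S.X₂ _ _) := hF.subsingleton_ext_succ J (n + 1)
      exact subsingleton_ext_X₃_left hS _ (n + 1)
    · intro h
      obtain ⟨K, P, f, g, w, _, hS⟩ := exists_shortExact_projective M
      refine ⟨K, P, f, g, isFlatMod_of_projective P, hS.moduleCat_injective_f,
        hS.moduleCat_surjective_g,
        (ShortComplex.ShortExact.moduleCat_exact_iff_function_exact _).1 hS.exact,
        (ih K).2 fun J => ?_⟩
      have := h J
      have := Abelian.Ext.subsingleton_of_projective P (CharDual.annihilator J) n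
      exact subsingleton_ext_X₁_left hS _ (n + 1)

theorem fdLE_of_shortExact_projective {S : ShortComplex (ModuleCat.{0} R)} (hS : S.ShortExact)
    [Projective S.X₂] {n : ℕ} (h : fdLE R (n + 1) S.X₃) : fdLE R n S.X₁ := by
  rw [fdLE_iff_subsingleton_ext] at h ⊢
  intro J
  have := h J
  have := Abelian.Ext.subsingleton_of_projective S.X₂ (CharDual.annihilator J) n
  exact subsingleton_ext_X₁_left hS _ (n + 1)

theorem LnInj.subsingleton_ext {W : ModuleCat.{0} R} (hW : LnInj R 1 W) (n : ℕ)
    {M : ModuleCat.{0} R} (hM : fdLE R (n + 1) M) : Subsingleton (Abelian.Ext M W (n + 1)) := by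
  induction n generalizing M with
  | zero => exact (extVanish_succ_iff R 0 M W).1 (hW M hM)
  | succ n ih =>
    obtain ⟨K, P, f, g, w, _, hS⟩ := exists_shortExact_projective M
    have := ih (fdLE_of_shortExact_projective hS hM)
    have := Abelian.Ext.subsingleton_of_projective P W (n + 1)
    exact subsingleton_ext_X₃_left hS _ (n + 1)

theorem lnInj_one_of_shortExact {S : ShortComplex (ModuleCat.{0} R)} (hS : S.ShortExact)
    [Injective S.X₂] (J : Submodule Rᵐᵒᵖ R) (h : S.X₁ = CharDual.annihilator J) :
    LnInj R 1 S.X₃ := by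
  intro M hM
  rw [extVanish_succ_iff R 0]
  have : Subsingleton (Abelian.Ext M S.X₁ (1 + 1)) := h ▸ (fdLE_iff_subsingleton_ext 1 M).1 hM J
  have := Abelian.Ext.subsingleton_of_injective M S.X₂ 0
  exact subsingleton_ext_X₃_right hS M 1

end Flat

/-- For `n ≥ 1`, `fd_R M ≤ n` iff `Ext^n_R(M, W) = 0` for every weak-injective
(`L_1`-injective) module `W`. -/
theorem stmt10 (n : ℕ) (hn : 1 ≤ n) (M : ModuleCat.{0} R) :
    fdLE R n M ↔ ∀ W : ModuleCat.{0} R, LnInj R 1 W → extVanish R n M W := by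
  obtain ⟨n, rfl⟩ := Nat.exists_eq_add_of_le' hn
  simp_rw [extVanish_succ_iff]
  refine ⟨fun hM W hW => hW.subsingleton_ext n hM, fun h => ?_⟩
  rw [fdLE_iff_subsingleton_ext]
  intro J
  let S := ShortComplex.mk (Injective.ι (CharDual.annihilator J))
    (Limits.cokernel.π _) (Limits.cokernel.condition _)
  have hS : S.ShortExact :=
    { exact := ShortComplex.exact_cokernel _
      mono_f := inferInstanceAs (Mono (Injective.ι _))
      epi_g := inferInstanceAs (Epi (Limits.cokernel.π _)) }
  have : Injective S.X₂ := inferInstanceAs (Injective (Injective.under _))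
  have := h S.X₃ (lnInj_one_of_shortExact hS J rfl)
  have := Abelian.Ext.subsingleton_of_injective M S.X₂ (n + 1)
  exact subsingleton_ext_X₁_right hS M (n + 1)
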